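/- Let (M,g) be a Riemannian 4-manifold with a parallel isometric paracomplex structure j, and define the neutral metric g'(X,Y) = g(jX, Y). Then g' is locally conformally flat if and only if g is Einstein. -/

import Mathlib

open Finset Matrix

/-- Partial derivative in the `i`-th coordinate direction on `ℝ⁴`. -/
noncomputable def pd (i : Fin 4) (f : (Fin 4 → ℝ) → ℝ) : (Fin 4 → ℝ) → ℝ :=
  fun x => deriv (fun t => f (Function.update x i t)) (x i)

/-- Christoffel symbols `Γ^k_{ij}` of a coordinate metric `g` on `ℝ⁴`. -/
noncomputable def christoffel (g : (Fin 4 → ℝ) → Matrix (Fin 4) (Fin 4) ℝ)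
    (k i j : Fin 4) : (Fin 4 → ℝ) → ℝ :=
  fun x => (1 / 2) * ∑ l, (g x)⁻¹ k l *
    (pd i (fun y => g y l j) x + pd j (fun y => g y l i) x - pd l (fun y => g y i j) x)

/-- Riemann curvature `R^l_{kij} = ∂ᵢΓ^l_{jk} − ∂ⱼΓ^l_{ik} + Γ^l_{im}Γ^m_{jk} − Γ^l_{jm}Γ^m_{ik}`. -/
noncomputable def riemannUp (g : (Fin 4 → ℝ) → Matrix (Fin 4) (Fin 4) ℝ)
    (l k i j : Fin 4) : (Fin 4 → ℝ) → ℝ :=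
  fun x => pd i (christoffel g l j k) x - pd j (christoffel g l i k) x
    + ∑ m, (christoffel g l i m x * christoffel g m j k x
      - christoffel g l j m x * christoffel g m i k x)

/-- The fully covariant Riemann tensor `R_{abcd} = g_{al} R^l_{bcd}`. -/
noncomputable def riemannLow (g : (Fin 4 → ℝ) → Matrix (Fin 4) (Fin 4) ℝ)
    (a b c d : Fin 4) : (Fin 4 → ℝ) → ℝ :=
  fun x => ∑ l, g x a l * riemannUp g l b c d x

/-- Ricci curvature `R_{kj} = R^a_{kaj}`. -/
noncomputable def ricciT (g : (Fin 4 → ℝ) → Matrix (Fin 4) (Fin 4) ℝ)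
    (k j : Fin 4) : (Fin 4 → ℝ) → ℝ :=
  fun x => ∑ a, riemannUp g a k a j x

/-- Scalar curvature `S = g^{kj} R_{kj}`. -/
noncomputable def scalarT (g : (Fin 4 → ℝ) → Matrix (Fin 4) (Fin 4) ℝ) :
    (Fin 4 → ℝ) → ℝ :=
  fun x => ∑ k, ∑ j, (g x)⁻¹ k j * ricciT g k j x

/-- The Weyl conformal curvature tensor in dimension 4:
`W_{abcd} = R_{abcd} − ½(g_{ac}R_{bd} − g_{ad}R_{bc} − g_{bc}R_{ad} + g_{bd}R_{ac})
 + (S/6)(g_{ac}g_{bd} − g_{ad}g_{bc})`. -/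
noncomputable def weylT (g : (Fin 4 → ℝ) → Matrix (Fin 4) (Fin 4) ℝ)
    (a b c d : Fin 4) : (Fin 4 → ℝ) → ℝ :=
  fun x => riemannLow g a b c d x
    - (1 / 2) * (g x a c * ricciT g b d x - g x a d * ricciT g b c x
      - g x b c * ricciT g a d x + g x b d * ricciT g a c x)
    + (scalarT g x / 6) * (g x a c * g x b d - g x a d * g x b c)

/-- Covariant derivative of an endomorphism field `j`. -/
noncomputable def covDerivEnd (g j : (Fin 4 → ℝ) → Matrix (Fin 4) (Fin 4) ℝ)
    (i k l : Fin 4) : (Fin 4 → ℝ) → ℝ :=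
  fun x => pd i (fun y => j y k l) x
    + ∑ m, christoffel g k i m x * j x m l
    - ∑ m, christoffel g m i l x * j x k m

/-!
Since `j` is parallel, so is `g' = g(j·, ·)` for the Levi-Civita connection `∇` of `g`; hence `∇` is
also the Levi-Civita connection of `g'`, and the two metrics have the same curvature operator `R`
and the same Ricci tensor. As `j` is parallel, `R(u, v)` commutes with `j`; pair symmetry turns this
into `R(ju, v) = R(u, jv)`, and the Bianchi identity then gives `R(ju, v) = jR(u, v)`. On each
eigenspace of `j`, which is two-dimensional, an alternating bilinear map with values in that
eigenspace is determined by its contraction, so that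
`2R(u, v)w = Ric(w, v)u - Ric(w, u)v + Ric(jw, v)ju - Ric(jw, u)jv`.
The Weyl tensor of `g'` is therefore algebraic in `g`, `j` and `Ric`: it vanishes if
`Ric = λg`, and if it vanishes then contracting it with `g⁻¹` gives `Ric = (S/4)g`, where the scalar
curvature `S` is constant by the contracted Bianchi identity (Schur's lemma).
-/

open scoped ContDiff

section PartialDerivatives

variable {f f₁ f₂ : (Fin 4 → ℝ) → ℝ}

theorem pd_eq_fderiv (hf : Differentiable ℝ f) (i : Fin 4) :
    pd i f = fun x => fderiv ℝ f x (Pi.single i 1) := by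
  funext x
  have hf' : HasFDerivAt f (fderiv ℝ f x) (Function.update x i (x i)) := by
    rw [Function.update_eq_self]
    exact (hf x).hasFDerivAt
  exact (hf'.comp_hasDerivAt (x i) (hasDerivAt_update x i (x i))).deriv

theorem pd_add (h₁ : Differentiable ℝ f₁) (h₂ : Differentiable ℝ f₂) (i : Fin 4)
    (x : Fin 4 → ℝ) : pd i (fun y => f₁ y + f₂ y) x = pd i f₁ x + pd i f₂ x := by
  rw [pd_eq_fderiv h₁, pd_eq_fderiv h₂, pd_eq_fderiv (h₁.fun_add h₂)]
  simp [fderiv_fun_add (h₁ x) (h₂ x)]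

theorem pd_neg (i : Fin 4) (x : Fin 4 → ℝ) : pd i (fun y => -f y) x = -pd i f x := by
  simp [pd]

theorem pd_mul (h₁ : Differentiable ℝ f₁) (h₂ : Differentiable ℝ f₂) (i : Fin 4)
    (x : Fin 4 → ℝ) : pd i (fun y => f₁ y * f₂ y) x = pd i f₁ x * f₂ x + f₁ x * pd i f₂ x := by
  rw [pd_eq_fderiv h₁, pd_eq_fderiv h₂, pd_eq_fderiv (h₁.fun_mul h₂)]
  simp [fderiv_fun_mul (h₁ x) (h₂ x)]
  ring

theorem pd_sum {ι : Type*} (s : Finset ι) {F : ι → (Fin 4 → ℝ) → ℝ}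
    (hF : ∀ m, Differentiable ℝ (F m)) (i : Fin 4) (x : Fin 4 → ℝ) :
    pd i (fun y => ∑ m ∈ s, F m y) x = ∑ m ∈ s, pd i (F m) x := by
  rw [pd_eq_fderiv (Differentiable.fun_sum fun m _ => hF m)]
  simp [fderiv_fun_sum fun m _ => hF m x, pd_eq_fderiv (hF _)]

theorem contDiff_pd (hf : ContDiff ℝ ∞ f) (i : Fin 4) : ContDiff ℝ ∞ (pd i f) := by
  rw [pd_eq_fderiv (hf.differentiable (by simp))]
  exact (hf.fderiv_right (m := ∞) (by simp)).clm_apply contDiff_const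

theorem pd_comm (hf : ContDiff ℝ ∞ f) (i k : Fin 4) (x : Fin 4 → ℝ) :
    pd i (pd k f) x = pd k (pd i f) x := by
  have hdf : Differentiable ℝ (fderiv ℝ f) :=
    (hf.fderiv_right (m := ∞) (by simp)).differentiable (by simp)
  have pd_pd (a b : Fin 4) : pd a (pd b f) x
      = fderiv ℝ (fderiv ℝ f) x (Pi.single a 1) (Pi.single b 1) := by
    rw [pd_eq_fderiv ((contDiff_pd hf b).differentiable (by simp)),
      pd_eq_fderiv (hf.differentiable (by simp))]
    simp [fderiv_clm_apply (hdf x) (differentiableAt_const _)]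
  have hsymm : IsSymmSndFDerivAt ℝ f x := hf.contDiffAt.isSymmSndFDerivAt (by
    rw [minSmoothness_of_isRCLikeNormedField]
    exact WithTop.coe_le_coe.2 le_top)
  rw [pd_pd, pd_pd, hsymm]

theorem eq_of_pd_eq_zero (hf : Differentiable ℝ f) (h : ∀ i x, pd i f x = 0)
    (x y : Fin 4 → ℝ) : f x = f y := by
  refine is_const_of_fderiv_eq_zero hf (fun z => ?_) x y
  refine ContinuousLinearMap.coe_injective (LinearMap.pi_ext' fun i => LinearMap.ext_ring ?_)
  simpa [pd_eq_fderiv hf] using h i z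

end PartialDerivatives

section MatrixFields

/-- A `4 × 4` matrix depending on a point of `ℝ⁴`: depending on context, a bilinear form
`h_{ab}` or an endomorphism `A^a_b` of the tangent bundle in the coordinate frame. -/
abbrev MatrixField : Type := (Fin 4 → ℝ) → Matrix (Fin 4) (Fin 4) ℝ

/-- Smoothness of a matrix field, required entrywise as in the theorem. -/
def SmoothEntries (A : MatrixField) : Prop :=
  ∀ a b, ContDiff ℝ ∞ fun x => A x a b

/-- The entrywise partial derivative of a matrix field. -/
noncomputable def matPd (i : Fin 4) (A : MatrixField) : MatrixField :=
  fun x => Matrix.of fun a b => pd i (fun y => A y a b) x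

variable {A B : MatrixField}

theorem SmoothEntries.differentiable (hA : SmoothEntries A) (a b : Fin 4) :
    Differentiable ℝ fun x => A x a b :=
  (hA a b).differentiable (by simp)

theorem SmoothEntries.add (hA : SmoothEntries A) (hB : SmoothEntries B) :
    SmoothEntries fun x => A x + B x :=
  fun a b => (hA a b).add (hB a b)

theorem SmoothEntries.neg (hA : SmoothEntries A) : SmoothEntries fun x => -A x :=
  fun a b => (hA a b).neg

theorem SmoothEntries.sub (hA : SmoothEntries A) (hB : SmoothEntries B) :
    SmoothEntries fun x => A x - B x :=
  fun a b => (hA a b).sub (hB a b)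

theorem SmoothEntries.mul (hA : SmoothEntries A) (hB : SmoothEntries B) :
    SmoothEntries fun x => A x * B x := by
  intro a b
  simp only [Matrix.mul_apply]
  exact ContDiff.sum fun m _ => (hA a m).mul (hB m b)

theorem SmoothEntries.transpose (hA : SmoothEntries A) : SmoothEntries fun x => (A x)ᵀ :=
  fun a b => hA b a

theorem SmoothEntries.matPd (hA : SmoothEntries A) (i : Fin 4) : SmoothEntries (matPd i A) :=
  fun a b => contDiff_pd (hA a b) i

theorem SmoothEntries.det (hA : SmoothEntries A) : ContDiff ℝ ∞ fun x => (A x).det := by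
  simp only [Matrix.det_apply']
  exact ContDiff.sum fun σ _ => contDiff_const.mul (contDiff_prod fun m _ => hA _ _)

theorem SmoothEntries.inv (hA : SmoothEntries A) (hdet : ∀ x, IsUnit (A x).det) :
    SmoothEntries fun x => (A x)⁻¹ := by
  intro a b
  simp only [Matrix.inv_def, Matrix.smul_apply, smul_eq_mul, Ring.inverse_eq_inv',
    Matrix.adjugate_apply]
  refine (hA.det.inv fun x => (hdet x).ne_zero).mul (SmoothEntries.det fun c d => ?_)
  by_cases hc : c = b
  · subst hc
    simpa using contDiff_const
  · simpa [Matrix.updateRow_ne hc] using hA c d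

theorem matPd_add (hA : SmoothEntries A) (hB : SmoothEntries B) (i : Fin 4) (x : Fin 4 → ℝ) :
    matPd i (fun y => A y + B y) x = matPd i A x + matPd i B x := by
  ext a b
  exact pd_add (hA.differentiable a b) (hB.differentiable a b) i x

theorem matPd_neg (i : Fin 4) (x : Fin 4 → ℝ) : matPd i (fun y => -A y) x = -matPd i A x := by
  ext a b
  exact pd_neg (f := fun y => A y a b) i x

theorem matPd_sub (hA : SmoothEntries A) (hB : SmoothEntries B) (i : Fin 4) (x : Fin 4 → ℝ) :
    matPd i (fun y => A y - B y) x = matPd i A x - matPd i B x := by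
  simp only [sub_eq_add_neg, matPd_add hA hB.neg, matPd_neg]

theorem matPd_mul (hA : SmoothEntries A) (hB : SmoothEntries B) (i : Fin 4) (x : Fin 4 → ℝ) :
    matPd i (fun y => A y * B y) x = matPd i A x * B x + A x * matPd i B x := by
  ext a b
  simp only [matPd, Matrix.of_apply, Matrix.add_apply, Matrix.mul_apply]
  rw [pd_sum _ fun m => (hA.differentiable a m).fun_mul (hB.differentiable m b),
    ← Finset.sum_add_distrib]
  exact Finset.sum_congr rfl fun m _ => pd_mul (hA.differentiable a m) (hB.differentiable m b) i x

theorem matPd_transpose (i : Fin 4) (x : Fin 4 → ℝ) :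
    matPd i (fun y => (A y)ᵀ) x = (matPd i A x)ᵀ := rfl

theorem matPd_comm (hA : SmoothEntries A) (i k : Fin 4) (x : Fin 4 → ℝ) :
    matPd i (matPd k A) x = matPd k (matPd i A) x := by
  ext a b
  exact pd_comm (hA a b) i k x

end MatrixFields

section Connections

variable {Γ : Fin 4 → MatrixField} {A h : MatrixField}

/-- The covariant derivative `∇ᵢA` of an endomorphism field. Throughout, a connection is given by
its matrices `(Γᵢ)^l_k = Γ^l_{ik}`. -/
noncomputable def covEnd (Γ : Fin 4 → MatrixField) (i : Fin 4) (A : MatrixField) : MatrixField :=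
  fun x => matPd i A x + (Γ i x * A x - A x * Γ i x)

/-- The covariant derivative `∇ᵢh` of a field of bilinear forms. -/
noncomputable def covForm (Γ : Fin 4 → MatrixField) (i : Fin 4) (h : MatrixField) : MatrixField :=
  fun x => matPd i h x - ((Γ i x)ᵀ * h x + h x * Γ i x)

/-- The curvature endomorphism `R(∂_c, ∂_d)`, with entries `(R_{cd})^l_k = R^l_{kcd}`. -/
noncomputable def curvature (Γ : Fin 4 → MatrixField) (c d : Fin 4) : MatrixField :=
  fun x => matPd c (Γ d) x - matPd d (Γ c) x + (Γ c x * Γ d x - Γ d x * Γ c x)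

/-- The Ricci tensor `R_{bd} = R^c_{bcd}`. -/
noncomputable def ricci (Γ : Fin 4 → MatrixField) : MatrixField :=
  fun x => Matrix.of fun b d => ∑ c, curvature Γ c d x c b

/-- The covariant derivative `∇_e R` of the curvature tensor, evaluated at `(∂_c, ∂_d)`. -/
noncomputable def covCurvature (Γ : Fin 4 → MatrixField) (e c d : Fin 4) : MatrixField :=
  fun x => covEnd Γ e (curvature Γ c d) x
    - ∑ m, (Γ e x m c • curvature Γ m d x + Γ e x m d • curvature Γ c m x)

theorem curvature_swap (c d : Fin 4) (x : Fin 4 → ℝ) :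
    curvature Γ d c x = -curvature Γ c d x := by
  simp only [curvature]
  abel

theorem smoothEntries_curvature (hΓ : ∀ i, SmoothEntries (Γ i)) (c d : Fin 4) :
    SmoothEntries (curvature Γ c d) :=
  (((hΓ d).matPd c).sub ((hΓ c).matPd d)).add (((hΓ c).mul (hΓ d)).sub ((hΓ d).mul (hΓ c)))

theorem smoothEntries_ricci (hΓ : ∀ i, SmoothEntries (Γ i)) : SmoothEntries (ricci Γ) :=
  fun b d => by
    simp only [ricci, Matrix.of_apply]
    exact ContDiff.sum fun c _ => smoothEntries_curvature hΓ c d c b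

theorem covForm_mul (hh : SmoothEntries h) (hA : SmoothEntries A) (i : Fin 4) (x : Fin 4 → ℝ) :
    covForm Γ i (fun y => h y * A y) x = covForm Γ i h x * A x + h x * covEnd Γ i A x := by
  simp only [covForm, covEnd, matPd_mul hh hA]
  noncomm_ring

theorem covEnd_covEnd_sub_covEnd_covEnd (hΓ : ∀ i, SmoothEntries (Γ i)) (hA : SmoothEntries A)
    (c d : Fin 4) (x : Fin 4 → ℝ) :
    covEnd Γ c (covEnd Γ d A) x - covEnd Γ d (covEnd Γ c A) x
      = curvature Γ c d x * A x - A x * curvature Γ c d x := by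
  have expand (a b : Fin 4) : matPd a (covEnd Γ b A) x = matPd a (matPd b A) x
      + ((matPd a (Γ b) x * A x + Γ b x * matPd a A x)
      - (matPd a A x * Γ b x + A x * matPd a (Γ b) x)) := by
    unfold covEnd
    rw [matPd_add (hA.matPd b) (((hΓ b).mul hA).sub (hA.mul (hΓ b))),
      matPd_sub ((hΓ b).mul hA) (hA.mul (hΓ b)), matPd_mul (hΓ b) hA, matPd_mul hA (hΓ b)]
  simp only [covEnd.eq_1 _ _ (covEnd _ _ _), expand, matPd_comm hA c d]
  simp only [covEnd, curvature]
  noncomm_ring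

theorem covForm_covForm_sub_covForm_covForm (hΓ : ∀ i, SmoothEntries (Γ i))
    (hh : SmoothEntries h) (c d : Fin 4) (x : Fin 4 → ℝ) :
    covForm Γ c (covForm Γ d h) x - covForm Γ d (covForm Γ c h) x
      = -((curvature Γ c d x)ᵀ * h x + h x * curvature Γ c d x) := by
  have expand (a b : Fin 4) : matPd a (covForm Γ b h) x = matPd a (matPd b h) x
      - (((matPd a (Γ b) x)ᵀ * h x + (Γ b x)ᵀ * matPd a h x)
      + (matPd a h x * Γ b x + h x * matPd a (Γ b) x)) := by
    unfold covForm
    rw [matPd_sub (hh.matPd b) (((hΓ b).transpose.mul hh).add (hh.mul (hΓ b))),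
      matPd_add ((hΓ b).transpose.mul hh) (hh.mul (hΓ b)), matPd_mul (hΓ b).transpose hh,
      matPd_mul hh (hΓ b), matPd_transpose]
  simp only [covForm.eq_1 _ _ (covForm _ _ _), expand, matPd_comm hh c d]
  simp only [covForm, curvature, Matrix.transpose_add, Matrix.transpose_sub,
    Matrix.transpose_mul]
  noncomm_ring

theorem curvature_mul_comm_of_covEnd_eq_zero (hΓ : ∀ i, SmoothEntries (Γ i))
    (hA : SmoothEntries A) (hpar : ∀ i, covEnd Γ i A = 0) (c d : Fin 4) (x : Fin 4 → ℝ) :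
    curvature Γ c d x * A x = A x * curvature Γ c d x := by
  have covEnd_zero (i : Fin 4) : covEnd Γ i 0 x = 0 := by
    ext a b
    simp [covEnd, matPd, pd]
  simpa [hpar, covEnd_zero, sub_eq_zero, eq_comm] using covEnd_covEnd_sub_covEnd_covEnd hΓ hA c d x

theorem curvature_skew_of_covForm_eq_zero (hΓ : ∀ i, SmoothEntries (Γ i))
    (hh : SmoothEntries h) (hpar : ∀ i, covForm Γ i h = 0) (c d : Fin 4) (x : Fin 4 → ℝ) :
    (curvature Γ c d x)ᵀ * h x = -(h x * curvature Γ c d x) := by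
  have covForm_zero (i : Fin 4) : covForm Γ i 0 x = 0 := by
    ext a b
    simp [covForm, matPd, pd]
  have := covForm_covForm_sub_covForm_covForm hΓ hh c d x
  rw [hpar, hpar, covForm_zero, covForm_zero, sub_self, zero_eq_neg] at this
  exact eq_neg_of_add_eq_zero_left this

theorem covEnd_curvature_cyclic (hΓ : ∀ i, SmoothEntries (Γ i)) (e c d : Fin 4)
    (x : Fin 4 → ℝ) :
    covEnd Γ e (curvature Γ c d) x + covEnd Γ c (curvature Γ d e) x
      + covEnd Γ d (curvature Γ e c) x = 0 := by
  have expand (e c d : Fin 4) : matPd e (curvature Γ c d) x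
      = matPd e (matPd c (Γ d)) x - matPd e (matPd d (Γ c)) x
        + ((matPd e (Γ c) x * Γ d x + Γ c x * matPd e (Γ d) x)
        - (matPd e (Γ d) x * Γ c x + Γ d x * matPd e (Γ c) x)) := by
    unfold curvature
    rw [matPd_add (((hΓ d).matPd c).sub ((hΓ c).matPd d))
        (((hΓ c).mul (hΓ d)).sub ((hΓ d).mul (hΓ c))),
      matPd_sub ((hΓ d).matPd c) ((hΓ c).matPd d),
      matPd_sub ((hΓ c).mul (hΓ d)) ((hΓ d).mul (hΓ c)),
      matPd_mul (hΓ c) (hΓ d), matPd_mul (hΓ d) (hΓ c)]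
  simp only [covEnd, expand]
  rw [matPd_comm (hΓ d) c e, matPd_comm (hΓ e) c d, matPd_comm (hΓ c) e d]
  simp only [curvature]
  noncomm_ring

/-- Vanishing torsion, `Γ^l_{ik} = Γ^l_{ki}`. -/
def IsTorsionFree (Γ : Fin 4 → MatrixField) : Prop :=
  ∀ i k l x, Γ i x l k = Γ k x l i

theorem IsTorsionFree.curvature_cyclic (hT : IsTorsionFree Γ) (l b c d : Fin 4)
    (x : Fin 4 → ℝ) :
    curvature Γ b c x l d + curvature Γ c d x l b + curvature Γ d b x l c = 0 := by
  have matPd_symm (a i k l : Fin 4) : matPd a (Γ i) x l k = matPd a (Γ k) x l i := by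
    simp only [matPd, Matrix.of_apply, hT i k l]
  simp only [curvature, Matrix.add_apply, Matrix.sub_apply, Matrix.mul_apply]
  rw [matPd_symm c b d, matPd_symm d c b, matPd_symm b d c]
  simp only [hT b d _ x, hT d c _ x, hT c b _ x]
  ring

theorem IsTorsionFree.covCurvature_cyclic (hT : IsTorsionFree Γ)
    (hΓ : ∀ i, SmoothEntries (Γ i)) (e c d : Fin 4) (x : Fin 4 → ℝ) :
    covCurvature Γ e c d x + covCurvature Γ c d e x + covCurvature Γ d e c x = 0 := by
  have hcov := covEnd_curvature_cyclic hΓ e c d x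
  have hsum : ∑ m, (Γ e x m c • curvature Γ m d x + Γ e x m d • curvature Γ c m x)
      + ∑ m, (Γ c x m d • curvature Γ m e x + Γ c x m e • curvature Γ d m x)
      + ∑ m, (Γ d x m e • curvature Γ m c x + Γ d x m c • curvature Γ e m x) = 0 := by
    rw [← Finset.sum_add_distrib, ← Finset.sum_add_distrib]
    refine Finset.sum_eq_zero fun m _ => ?_
    rw [hT c e, hT d e, hT d c, curvature_swap d m, curvature_swap c m, curvature_swap e m]
    module
  simp only [covCurvature]
  linear_combination (norm := abel) hcov - hsum

theorem covCurvature_swap (e c d : Fin 4) (x : Fin 4 → ℝ) :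
    covCurvature Γ e d c x = -covCurvature Γ e c d x := by
  have hcov : covEnd Γ e (curvature Γ d c) x = -covEnd Γ e (curvature Γ c d) x := by
    rw [show curvature Γ d c = fun y => -curvature Γ c d y from funext (curvature_swap c d)]
    simp only [covEnd, matPd_neg]
    noncomm_ring
  have hsum : ∑ m, (Γ e x m d • curvature Γ m c x + Γ e x m c • curvature Γ d m x)
      = -∑ m, (Γ e x m c • curvature Γ m d x + Γ e x m d • curvature Γ c m x) := by
    rw [← Finset.sum_neg_distrib]
    refine Finset.sum_congr rfl fun m _ => ?_
    rw [curvature_swap c m, curvature_swap m d]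
    module
  rw [covCurvature, hcov, hsum, covCurvature, neg_sub_neg, neg_sub]

theorem sum_covCurvature_apply (hΓ : ∀ i, SmoothEntries (Γ i)) (e b d : Fin 4)
    (x : Fin 4 → ℝ) :
    ∑ c, covCurvature Γ e c d x c b = covForm Γ e (ricci Γ) x b d := by
  have matPd_ricci : matPd e (ricci Γ) x b d = ∑ c, matPd e (curvature Γ c d) x c b := by
    simp only [matPd, ricci, Matrix.of_apply]
    exact pd_sum _ (fun c => (smoothEntries_curvature hΓ c d).differentiable c b) e x
  have hcomm : ∑ c, ∑ m, Γ e x c m * curvature Γ c d x m b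
      = ∑ c, ∑ m, Γ e x m c * curvature Γ m d x c b := Finset.sum_comm
  have hleft : ∑ m, Γ e x m b * ∑ c, curvature Γ c d x c m
      = ∑ c, ∑ m, curvature Γ c d x c m * Γ e x m b := by
    rw [Finset.sum_comm]
    simp only [Finset.mul_sum, mul_comm]
  have hright : ∑ m, (∑ c, curvature Γ c m x c b) * Γ e x m d
      = ∑ c, ∑ m, Γ e x m d * curvature Γ c m x c b := by
    rw [Finset.sum_comm]
    simp only [mul_comm, Finset.mul_sum]
  simp only [covCurvature, covEnd, covForm, Matrix.sub_apply, Matrix.add_apply, Matrix.mul_apply,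
    Matrix.sum_apply, Matrix.smul_apply, Matrix.transpose_apply, smul_eq_mul,
    Finset.sum_add_distrib, Finset.sum_sub_distrib, matPd_ricci]
  simp only [ricci, Matrix.of_apply, hcomm, hleft, hright]
  ring

end Connections

section LeviCivita

variable {Γ : Fin 4 → MatrixField} {g : MatrixField}

/-- A smooth pseudo-Riemannian metric, of arbitrary signature. -/
structure IsPseudoMetric (g : MatrixField) : Prop where
  smooth : SmoothEntries g
  symm : ∀ x, (g x)ᵀ = g x
  isUnit_det : ∀ x, IsUnit (g x).det

/-- The defining properties of the Levi-Civita connection of `g`. -/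
structure IsLeviCivita (Γ : Fin 4 → MatrixField) (g : MatrixField) : Prop where
  smooth : ∀ i, SmoothEntries (Γ i)
  torsionFree : IsTorsionFree Γ
  parallel : ∀ i, covForm Γ i g = 0

/-- The Levi-Civita connection of `g`, as given by the Christoffel symbols. -/
noncomputable def connMatrix (g : MatrixField) (i : Fin 4) : MatrixField :=
  fun x => Matrix.of fun l k => christoffel g l i k x

theorem curvature_connMatrix_apply (l k c d : Fin 4) (x : Fin 4 → ℝ) :
    curvature (connMatrix g) c d x l k = riemannUp g l k c d x := by
  simp [curvature, riemannUp, matPd, connMatrix, Matrix.mul_apply, Finset.sum_sub_distrib]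

theorem ricci_connMatrix_apply (k d : Fin 4) (x : Fin 4 → ℝ) :
    ricci (connMatrix g) x k d = ricciT g k d x := by
  simp only [ricci, ricciT, Matrix.of_apply, curvature_connMatrix_apply]

theorem covEnd_connMatrix_apply (j : MatrixField) (i k l : Fin 4) (x : Fin 4 → ℝ) :
    covEnd (connMatrix g) i j x k l = covDerivEnd g j i k l x := by
  simp only [covEnd, covDerivEnd, connMatrix, matPd, Matrix.add_apply, Matrix.sub_apply,
    Matrix.mul_apply, Matrix.of_apply, mul_comm (j x k _)]
  ring

theorem mul_connMatrix_apply (hg : IsPseudoMetric g) (a i b : Fin 4) (x : Fin 4 → ℝ) :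
    (g x * connMatrix g i x) a b
      = (1 / 2) * (matPd i g x a b + matPd b g x a i - matPd a g x i b) := by
  have hconn : connMatrix g i x = (g x)⁻¹ * Matrix.of fun m b =>
      (1 / 2) * (matPd i g x m b + matPd b g x m i - matPd m g x i b) := by
    ext k b
    simp only [connMatrix, christoffel, matPd, Matrix.mul_apply, Matrix.of_apply, Finset.mul_sum]
    exact Finset.sum_congr rfl fun m _ => by ring
  rw [hconn, Matrix.mul_nonsing_inv_cancel_left _ _ (hg.isUnit_det x), Matrix.of_apply]

theorem IsPseudoMetric.transpose_inv (hg : IsPseudoMetric g) (x : Fin 4 → ℝ) :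
    ((g x)⁻¹)ᵀ = (g x)⁻¹ := by
  rw [Matrix.transpose_nonsing_inv, hg.symm]

theorem IsPseudoMetric.matPd_symm (hg : IsPseudoMetric g) (i a b : Fin 4) (x : Fin 4 → ℝ) :
    matPd i g x a b = matPd i g x b a := by
  have : g = fun y => (g y)ᵀ := funext fun y => (hg.symm y).symm
  conv_lhs => rw [this, matPd_transpose, Matrix.transpose_apply]

theorem isTorsionFree_connMatrix (hg : IsPseudoMetric g) : IsTorsionFree (connMatrix g) := by
  intro i k l x
  have (a : Fin 4) := hg.matPd_symm a i k x
  simp only [matPd, Matrix.of_apply] at this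
  simp only [connMatrix, Matrix.of_apply, christoffel, this]
  congr! 2
  ring

theorem smoothEntries_connMatrix (hg : IsPseudoMetric g) (i : Fin 4) :
    SmoothEntries (connMatrix g i) := fun k l =>
  contDiff_const.mul (ContDiff.sum fun m _ => (hg.smooth.inv hg.isUnit_det k m).mul
    (((hg.smooth.matPd i m l).add (hg.smooth.matPd l m i)).sub (hg.smooth.matPd m i l)))

theorem isLeviCivita_connMatrix (hg : IsPseudoMetric g) : IsLeviCivita (connMatrix g) g where
  smooth := smoothEntries_connMatrix hg
  torsionFree := isTorsionFree_connMatrix hg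
  parallel i := by
    ext x a b
    have htr : (connMatrix g i x)ᵀ * g x = (g x * connMatrix g i x)ᵀ := by
      rw [Matrix.transpose_mul, hg.symm]
    rw [covForm, htr, Matrix.sub_apply, Matrix.add_apply, Matrix.transpose_apply,
      mul_connMatrix_apply hg, mul_connMatrix_apply hg, hg.matPd_symm i b a,
      hg.matPd_symm b i a, hg.matPd_symm a i b, Pi.zero_apply, Matrix.zero_apply]
    ring

theorem IsLeviCivita.eq_connMatrix (hΓ : IsLeviCivita Γ g) (hg : IsPseudoMetric g) :
    Γ = connMatrix g := by
  have hpd (i a b : Fin 4) (x : Fin 4 → ℝ) :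
      matPd i g x a b = (g x * Γ i x) b a + (g x * Γ i x) a b := by
    have htr : (Γ i x)ᵀ * g x = (g x * Γ i x)ᵀ := by rw [Matrix.transpose_mul, hg.symm]
    have := congrFun (congrFun (congrFun (hΓ.parallel i) x) a) b
    rwa [covForm, htr, Matrix.sub_apply, Pi.zero_apply, Matrix.zero_apply, sub_eq_zero] at this
  have hswap (i a b : Fin 4) (x : Fin 4 → ℝ) : (g x * Γ i x) a b = (g x * Γ b x) a i := by
    simp only [Matrix.mul_apply, hΓ.torsionFree i b]
  have hlower (i : Fin 4) (x : Fin 4 → ℝ) : g x * Γ i x = g x * connMatrix g i x := by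
    ext a b
    rw [mul_connMatrix_apply hg, hpd, hpd, hpd, hswap a b i, hswap b i a, hswap b a i]
    ring
  funext i x
  rw [← Matrix.nonsing_inv_mul_cancel_left _ (Γ i x) (hg.isUnit_det x), hlower,
    Matrix.nonsing_inv_mul_cancel_left _ _ (hg.isUnit_det x)]

theorem IsLeviCivita.curvature_mem_skewAdjoint (hΓ : IsLeviCivita Γ g) (hg : SmoothEntries g)
    (c d : Fin 4) (x : Fin 4 → ℝ) :
    curvature Γ c d x ∈ skewAdjointMatricesSubmodule (g x) := by
  rw [mem_skewAdjointMatricesSubmodule, Matrix.IsSkewAdjoint, Matrix.IsAdjointPair,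
    curvature_skew_of_covForm_eq_zero hΓ.smooth hg hΓ.parallel, Matrix.mul_neg]

end LeviCivita

section SchurLemma

variable {Γ : Fin 4 → MatrixField} {g : MatrixField}

theorem covForm_transpose (i : Fin 4) (h : MatrixField) (x : Fin 4 → ℝ) :
    covForm Γ i (fun y => (h y)ᵀ) x = (covForm Γ i h x)ᵀ := by
  simp only [covForm, matPd_transpose, Matrix.transpose_sub, Matrix.transpose_add,
    Matrix.transpose_mul, Matrix.transpose_transpose, add_comm]

theorem covForm_neg (i : Fin 4) (h : MatrixField) (x : Fin 4 → ℝ) :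
    covForm Γ i (fun y => -h y) x = -covForm Γ i h x := by
  simp only [covForm, matPd_neg]
  noncomm_ring

theorem covForm_smul {f : (Fin 4 → ℝ) → ℝ} (hf : Differentiable ℝ f) {h : MatrixField}
    (hh : SmoothEntries h) (i : Fin 4) (x : Fin 4 → ℝ) :
    covForm Γ i (fun y => f y • h y) x = pd i f x • h x + f x • covForm Γ i h x := by
  have matPd_smul : matPd i (fun y => f y • h y) x = pd i f x • h x + f x • matPd i h x := by
    ext a b
    exact pd_mul hf (hh.differentiable a b) i x
  simp only [covForm, matPd_smul, Matrix.mul_smul, Matrix.smul_mul]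
  module

namespace IsLeviCivita

theorem covCurvature_mem_skewAdjoint (hΓ : IsLeviCivita Γ g) (hg : IsPseudoMetric g)
    (e c d : Fin 4) (x : Fin 4 → ℝ) :
    covCurvature Γ e c d x ∈ skewAdjointMatricesSubmodule (g x) := by
  have hskew (c d : Fin 4) (y : Fin 4 → ℝ) := hΓ.curvature_mem_skewAdjoint hg.smooth c d y
  refine Submodule.sub_mem _ ?_ (Submodule.sum_mem _ fun m _ => Submodule.add_mem _
    (Submodule.smul_mem _ _ (hskew m d x)) (Submodule.smul_mem _ _ (hskew c m x)))
  have hlower : covForm Γ e (fun y => g y * curvature Γ c d y) x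
      = g x * covEnd Γ e (curvature Γ c d) x := by
    rw [covForm_mul hg.smooth (smoothEntries_curvature hΓ.smooth c d), hΓ.parallel]
    simp
  have htr : (fun y => (g y * curvature Γ c d y)ᵀ) = fun y => -(g y * curvature Γ c d y) := by
    funext y
    rw [Matrix.transpose_mul, hg.symm,
      curvature_skew_of_covForm_eq_zero hΓ.smooth hg.smooth hΓ.parallel]
  rw [mem_skewAdjointMatricesSubmodule, Matrix.IsSkewAdjoint, Matrix.IsAdjointPair,
    Matrix.mul_neg, ← hlower, ← covForm_neg, ← htr, covForm_transpose, hlower,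
    Matrix.transpose_mul, hg.symm]

theorem sum_inv_mul_covForm_ricci (hΓ : IsLeviCivita Γ g) (hg : IsPseudoMetric g) (e : Fin 4)
    (x : Fin 4 → ℝ) :
    ∑ d, ∑ b, (g x)⁻¹ b d * covForm Γ e (ricci Γ) x b d
      = 2 * ∑ d, ∑ b, (g x)⁻¹ b d * covForm Γ d (ricci Γ) x b e := by
  have hskew (e c d a b : Fin 4) : (covCurvature Γ e c d x * (g x)⁻¹) a b
      = -(covCurvature Γ e c d x * (g x)⁻¹) b a := by
    have hK : (covCurvature Γ e c d x)ᵀ * g x = g x * -covCurvature Γ e c d x :=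
      (mem_skewAdjointMatricesSubmodule _ _).mp (hΓ.covCurvature_mem_skewAdjoint hg e c d x)
    have hraise : (covCurvature Γ e c d x * (g x)⁻¹)ᵀ = -(covCurvature Γ e c d x * (g x)⁻¹) := by
      rw [Matrix.transpose_mul, hg.transpose_inv,
        ← Matrix.mul_nonsing_inv_cancel_right (g x) (covCurvature Γ e c d x)ᵀ (hg.isUnit_det x),
        hK, Matrix.mul_assoc (g x), Matrix.nonsing_inv_mul_cancel_left _ _ (hg.isUnit_det x),
        Matrix.neg_mul]
    rw [← Matrix.neg_apply, ← hraise, Matrix.transpose_apply]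
  have hcontract (e a d : Fin 4) : ∑ b, (g x)⁻¹ b d * covForm Γ e (ricci Γ) x b a
      = ∑ c, (covCurvature Γ e c a x * (g x)⁻¹) c d := by
    simp only [← sum_covCurvature_apply hΓ.smooth, Finset.mul_sum, Matrix.mul_apply, mul_comm]
    exact Finset.sum_comm
  have hcyclic (c d : Fin 4) : (covCurvature Γ e c d x * (g x)⁻¹) c d
      = (covCurvature Γ c d e x * (g x)⁻¹) d c + (covCurvature Γ d c e x * (g x)⁻¹) c d := by
    have hK : covCurvature Γ e c d x = covCurvature Γ d c e x - covCurvature Γ c d e x := by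
      have := hΓ.torsionFree.covCurvature_cyclic hΓ.smooth e c d x
      rw [covCurvature_swap d c e] at this
      linear_combination (norm := abel) this
    rw [hK, Matrix.sub_mul, Matrix.sub_apply, hskew c d e c d]
    ring
  simp only [hcontract, hcyclic, Finset.sum_add_distrib, two_mul]
  exact congrArg (· + _) Finset.sum_comm

theorem eq_of_ricci_eq_smul (hΓ : IsLeviCivita Γ g) (hg : IsPseudoMetric g)
    {f : (Fin 4 → ℝ) → ℝ} (hf : Differentiable ℝ f) (hRic : ∀ x, ricci Γ x = f x • g x)
    (x y : Fin 4 → ℝ) : f x = f y := by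
  refine eq_of_pd_eq_zero hf (fun e z => ?_) x y
  have hcov (i : Fin 4) : covForm Γ i (ricci Γ) z = pd i f z • g z := by
    rw [show ricci Γ = fun y => f y • g y from funext hRic, covForm_smul hf hg.smooth,
      hΓ.parallel]
    simp
  have hinv (d a : Fin 4) : ∑ b, (g z)⁻¹ b d * g z b a = (1 : Matrix (Fin 4) (Fin 4) ℝ) d a := by
    rw [← Matrix.nonsing_inv_mul _ (hg.isUnit_det z), Matrix.mul_apply]
    refine Finset.sum_congr rfl fun b _ => ?_
    rw [← Matrix.transpose_apply (g z)⁻¹, hg.transpose_inv]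
  have := hΓ.sum_inv_mul_covForm_ricci hg e z
  simp only [hcov, Matrix.smul_apply, smul_eq_mul, mul_left_comm _ (pd _ f z),
    ← Finset.mul_sum, hinv, Matrix.one_apply] at this
  simp only [↓reduceIte, sum_const, card_univ, Fintype.card_fin, nsmul_eq_mul, Nat.cast_ofNat,
    mul_one, mul_ite, mul_zero, sum_ite_eq', mem_univ] at this
  linarith

end IsLeviCivita

end SchurLemma

section CurvatureAlgebra

variable {K V : Type*} [Field K] [AddCommGroup V] [Module K V]

/-- The algebraic symmetries of a Riemann tensor `R u v w = R(u, v)w` with respect to the bilinear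
form `B`. -/
structure IsCurvatureOperator (B : LinearMap.BilinForm K V) (R : V →ₗ[K] V →ₗ[K] Module.End K V) :
    Prop where
  swap : ∀ u v, R v u = -R u v
  skew : ∀ u v, B.IsSkewAdjoint (R u v)
  cyclic : ∀ u v w, R u v w + R v w u + R w u v = 0

namespace IsCurvatureOperator

variable {B : LinearMap.BilinForm K V} {R : V →ₗ[K] V →ₗ[K] Module.End K V} {j : Module.End K V}

theorem pair_symm [NeZero (2 : K)] (hR : IsCurvatureOperator B R) (hB : B.IsSymm) (u v w z : V) :
    B (R u v w) z = B (R w z u) v := by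
  have hswap (u v w z : V) : B (R u v w) z = -B (R v u w) z := by simp [hR.swap v u]
  have hskew (u v w z : V) : B (R u v w) z = -B (R u v z) w := by
    rw [hR.skew u v w z, Pi.neg_apply, map_neg, hB.eq]
  have hcyclic (u v w z : V) : B (R u v w) z + B (R v w u) z + B (R w u v) z = 0 := by
    rw [← LinearMap.add_apply, ← LinearMap.add_apply, ← map_add, ← map_add, hR.cyclic, map_zero,
      LinearMap.zero_apply]
  refine mul_left_cancel₀ (two_ne_zero (α := K)) ?_
  linear_combination hcyclic u v w z + hcyclic v w z u - hcyclic w z u v - hcyclic z u v w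
    + hskew u v w z - hskew w z u v - hskew v w u z + hskew z u v w - hswap w u v z
    + hskew u w v z - hswap z v w u + hskew v z u w

theorem apply_map_left_eq_apply_map_right [NeZero (2 : K)] (hR : IsCurvatureOperator B R)
    (hB : B.IsSymm) (hBl : B.SeparatingLeft) (hj : B.IsSelfAdjoint j)
    (hcomm : ∀ u v w, R u v (j w) = j (R u v w)) (u v : V) : R (j u) v = R u (j v) := by
  ext w
  refine sub_eq_zero.mp (hBl _ fun z => ?_)
  rw [map_sub, LinearMap.sub_apply, sub_eq_zero, hR.pair_symm hB, hcomm, hj,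
    hR.pair_symm hB w z]

theorem apply_map_left [NeZero (2 : K)] (hR : IsCurvatureOperator B R) (hB : B.IsSymm)
    (hBl : B.SeparatingLeft) (hj : B.IsSelfAdjoint j)
    (hcomm : ∀ u v w, R u v (j w) = j (R u v w)) (u v w : V) :
    R (j u) v w = j (R u v w) := by
  have hmove := hR.apply_map_left_eq_apply_map_right hB hBl hj hcomm
  have hu := hR.cyclic (j u) v w
  have hv := hR.cyclic u (j v) w
  have hw := hR.cyclic u v (j w)
  have hj := congrArg j (hR.cyclic u v w)
  simp only [map_add, map_zero, hcomm, ← hmove] at hu hv hw hj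
  refine smul_right_injective V (two_ne_zero (α := K)) ?_
  linear_combination (norm := module) hu + hv - hw - hj

end IsCurvatureOperator

/-- The Ricci form `Ric(w, v) = tr (u ↦ R(u, v)w)`. -/
noncomputable def ricciForm (R : V →ₗ[K] V →ₗ[K] Module.End K V) : LinearMap.BilinForm K V :=
  (LinearMap.lflip.toLinearMap ∘ₗ R.flip).flip.compr₂ (LinearMap.trace K V)

theorem ricciForm_apply (R : V →ₗ[K] V →ₗ[K] Module.End K V) (w v : V) :
    ricciForm R w v = LinearMap.trace K V ((R.flip v).flip w) := rfl

theorem isAlt_apply_eq_trace_smul_sub {A : V →ₗ[K] V →ₗ[K] V} (hA : A.IsAlt)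
    (hV : Module.finrank K V = 2) (u v : V) :
    A u v = LinearMap.trace K V (A.flip v) • u - LinearMap.trace K V (A.flip u) • v := by
  have : Module.Finite K V := Module.finite_of_finrank_pos (by omega)
  let b := Module.finBasisOfFinrankEq K V hV
  have happly (u v : V) :
      A u v = (b.repr u 0 * b.repr v 1 - b.repr u 1 * b.repr v 0) • A (b 0) (b 1) := by
    conv_lhs => rw [← b.sum_repr u, ← b.sum_repr v]
    simp only [Fin.sum_univ_two, map_add, map_smul, LinearMap.add_apply, LinearMap.smul_apply,
      hA.self_eq_zero, ← hA.neg (b 0) (b 1)]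
    module
  have htrace (v : V) : LinearMap.trace K V (A.flip v)
      = b.repr v 1 * b.repr (A (b 0) (b 1)) 0 - b.repr v 0 * b.repr (A (b 0) (b 1)) 1 := by
    rw [LinearMap.trace_eq_matrix_trace K b, Matrix.trace_fin_two]
    simp [LinearMap.toMatrix_apply, happly _ v, sub_eq_add_neg]
  refine b.ext_elem fun i => ?_
  rw [happly, htrace, htrace]
  fin_cases i <;> simp <;> ring

theorem proj_curvature_eq [CharZero K] [FiniteDimensional K V]
    {R : V →ₗ[K] V →ₗ[K] Module.End K V} (hswap : ∀ u v, R v u = -R u v)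
    {p : Module.End K V} (hp : IsIdempotentElem p) (htr : LinearMap.trace K V p = 2)
    (hleft : ∀ u v w, R (p u) v w = p (R u v w)) (hcomm : ∀ u v w, R u v (p w) = p (R u v w))
    (u v w : V) :
    p (R u v w) = ricciForm R (p w) v • p u - ricciForm R (p w) u • p v := by
  have hpp (x : V) : p (p x) = p x := LinearMap.congr_fun hp x
  have hright (u v w : V) : R u (p v) w = p (R u v w) := by
    rw [hswap, LinearMap.neg_apply, hleft, hswap, LinearMap.neg_apply, map_neg, neg_neg]
  have : IsAddTorsionFree V := .of_isTorsionFree K V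
  have hE : Module.finrank K (LinearMap.range p) = 2 := by
    exact_mod_cast (LinearMap.IsIdempotentElem.isProj_range p hp).trace.symm.trans htr
  let A : LinearMap.range p →ₗ[K] LinearMap.range p →ₗ[K] LinearMap.range p :=
    ((R.domRestrict₁₂ _ _).compr₂ (LinearMap.applyₗ w)).compr₂ p.rangeRestrict
  have hA_apply (x y : LinearMap.range p) : (A x y : V) = p (R x y w) := rfl
  have hA : A.IsAlt := by
    intro x
    have hxx : R x x w = 0 := self_eq_neg.mp (LinearMap.congr_fun (hswap x x) w)
    ext
    rw [hA_apply, hxx, map_zero, Submodule.coe_zero]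
  have htrace (v : V) :
      LinearMap.trace K _ (A.flip (p.rangeRestrict v)) = ricciForm R (p w) v := by
    rw [ricciForm_apply, ← LinearMap.trace_restrict_eq_of_forall_mem (LinearMap.range p)
      ((R.flip v).flip (p w)) fun x => ⟨R x v w, (hcomm x v w).symm⟩]
    congr 1
    ext x
    exact (congrArg p (hright x v w)).trans ((hpp _).trans (hcomm x v w).symm)
  have := congrArg Subtype.val
    (isAlt_apply_eq_trace_smul_sub hA hE (p.rangeRestrict u) (p.rangeRestrict v))
  rw [htrace, htrace, hA_apply] at this
  simpa [hleft, hright, hpp] using this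

theorem curvature_eq_ricciForm_of_involution [CharZero K] {R : V →ₗ[K] V →ₗ[K] Module.End K V}
    (hswap : ∀ u v, R v u = -R u v) (hV : Module.finrank K V = 4)
    {j : Module.End K V} (hj2 : j * j = 1) (htr : LinearMap.trace K V j = 0)
    (hleft : ∀ u v w, R (j u) v w = j (R u v w)) (hcomm : ∀ u v w, R u v (j w) = j (R u v w))
    (u v w : V) :
    R u v w = (2⁻¹ : K) • (ricciForm R w v • u - ricciForm R w u • v
      + ricciForm R (j w) v • j u - ricciForm R (j w) u • j v) := by
  have : FiniteDimensional K V := Module.finite_of_finrank_pos (by omega)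
  have hproj (s : K) (hs : s * s = 1) :=
    proj_curvature_eq hswap (p := (2⁻¹ : K) • (1 + s • j))
      (by
        rw [IsIdempotentElem, smul_mul_smul_comm, mul_add, add_mul, add_mul, smul_mul_smul_comm,
          hs, hj2]
        simp only [one_mul, mul_one]
        module)
      (by rw [map_smul, map_add, map_smul, LinearMap.trace_one, htr, hV]; norm_num)
      (by simp [hleft]) (by simp [hcomm]) u v w
  have hplus := hproj 1 (by ring)
  have hminus := hproj (-1) (by ring)
  simp only [LinearMap.smul_apply, LinearMap.add_apply, Module.End.one_apply, map_smul, map_add,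
    smul_eq_mul] at hplus hminus
  linear_combination (norm := module) hplus + hminus

theorem trace_eq_zero_of_finrank_eigenspace [CharZero K] [FiniteDimensional K V]
    {j : Module.End K V} (hj2 : j * j = 1)
    (hfinrank : Module.finrank K V = 2 * Module.finrank K (Module.End.eigenspace j 1)) :
    LinearMap.trace K V j = 0 := by
  have hproj : LinearMap.IsProj (Module.End.eigenspace j 1) ((2⁻¹ : K) • (1 + j)) := by
    refine ⟨fun v => ?_, fun v hv => ?_⟩
    · have hjj : j (j v) = v := LinearMap.congr_fun hj2 v
      simp [hjj, add_comm]
    · have : j v = v := by simpa [Module.End.mem_eigenspace_iff] using hv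
      simp only [LinearMap.smul_apply, LinearMap.add_apply, Module.End.one_apply, this]
      module
  have htrace := hproj.trace
  rw [map_smul, map_add, LinearMap.trace_one, hfinrank, smul_eq_mul] at htrace
  push_cast at htrace
  linear_combination 2 * htrace

variable {n : Type*} [Fintype n] [DecidableEq n]

theorem toLin'_mul_self_eq_one {A : Matrix n n K} (hA : A * A = 1) :
    Matrix.toLin' A * Matrix.toLin' A = 1 := by
  rw [Module.End.mul_eq_comp, ← Matrix.toLin'_mul, hA, Matrix.toLin'_one, Module.End.one_eq_id]

theorem trace_eq_zero_of_finrank_eigenspace_toLin' [CharZero K] {A : Matrix n n K}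
    (hA : A * A = 1) (hfinrank : Fintype.card n
      = 2 * Module.finrank K (Module.End.eigenspace (Matrix.toLin' A) 1)) :
    A.trace = 0 := by
  rw [← Matrix.trace_toLin'_eq]
  exact trace_eq_zero_of_finrank_eigenspace (toLin'_mul_self_eq_one hA) (by simpa using hfinrank)

end CurvatureAlgebra

section CurvatureInCoordinates

variable {Γ : Fin 4 → MatrixField} {g : MatrixField}

/-- The curvature tensor of `Γ` at `x`, as the trilinear map `(u, v) ↦ R(u, v)`. -/
noncomputable def curvatureMap (Γ : Fin 4 → MatrixField) (x : Fin 4 → ℝ) :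
    (Fin 4 → ℝ) →ₗ[ℝ] (Fin 4 → ℝ) →ₗ[ℝ] Module.End ℝ (Fin 4 → ℝ) :=
  Matrix.toLinearMap₂' ℝ (Matrix.of fun c d => Matrix.toLin' (curvature Γ c d x))

theorem curvatureMap_apply (x u v : Fin 4 → ℝ) :
    curvatureMap Γ x u v = Matrix.toLin' (∑ c, ∑ d, u c • v d • curvature Γ c d x) := by
  simp only [curvatureMap, Matrix.toLinearMap₂'_apply, Matrix.of_apply, map_sum, map_smul]

theorem curvatureMap_single (x : Fin 4 → ℝ) (c d : Fin 4) :
    curvatureMap Γ x (Pi.single c 1) (Pi.single d 1) = Matrix.toLin' (curvature Γ c d x) := by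
  simp [curvatureMap_apply, Pi.single_apply]

theorem ricciForm_curvatureMap (x : Fin 4 → ℝ) :
    ricciForm (curvatureMap Γ x) = Matrix.toLinearMap₂' ℝ (ricci Γ x) := by
  refine LinearMap.ext_basis (Pi.basisFun ℝ (Fin 4)) (Pi.basisFun ℝ (Fin 4)) fun b d => ?_
  rw [ricciForm_apply, LinearMap.trace_eq_matrix_trace ℝ (Pi.basisFun ℝ (Fin 4))]
  simp [Matrix.trace, curvatureMap_single, Matrix.toLinearMap₂'_apply,
    Pi.single_apply, ricci]

theorem IsLeviCivita.isCurvatureOperator_curvatureMap (hΓ : IsLeviCivita Γ g)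
    (hg : SmoothEntries g) (x : Fin 4 → ℝ) :
    IsCurvatureOperator (Matrix.toLinearMap₂' ℝ (g x)) (curvatureMap Γ x) where
  swap u v := by
    rw [curvatureMap_apply, curvatureMap_apply, Finset.sum_comm]
    rw [← map_neg, ← Finset.sum_neg_distrib]
    congr! 2 with d
    rw [← Finset.sum_neg_distrib]
    congr! 1 with c
    rw [curvature_swap d c, smul_neg, smul_neg, smul_comm]
  skew u v := by
    have hK : ∑ c, ∑ d, u c • v d • curvature Γ c d x ∈ skewAdjointMatricesSubmodule (g x) :=
      Submodule.sum_mem _ fun c _ => Submodule.sum_mem _ fun d _ => Submodule.smul_mem _ _ <|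
        Submodule.smul_mem _ _ <| hΓ.curvature_mem_skewAdjoint hg c d x
    rw [curvatureMap_apply]
    have := (isAdjointPair_toLinearMap₂' _ _ _ _).mpr ((mem_skewAdjointMatricesSubmodule _ _).mp hK)
    rwa [map_neg] at this
  cyclic u v w := by
    ext l
    have hsum (u v w : Fin 4 → ℝ) : curvatureMap Γ x u v w l
        = ∑ c, ∑ d, ∑ b, u c * v d * w b * curvature Γ c d x l b := by
      simp only [curvatureMap_apply, map_sum, map_smul, LinearMap.sum_apply, Finset.sum_apply,
        LinearMap.smul_apply, Pi.smul_apply, smul_eq_mul, Matrix.toLin'_apply, Matrix.mulVec,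
        dotProduct, Finset.mul_sum]
      congr! 3
      ring
    have hv := (hsum v w u).trans Finset.sum_comm_cycle
    have hw := (hsum w u v).trans Finset.sum_comm_cycle.symm
    rw [Pi.add_apply, Pi.add_apply, hsum, hv, hw]
    simp only [← Finset.sum_add_distrib]
    refine Finset.sum_eq_zero fun c _ => Finset.sum_eq_zero fun d _ => Finset.sum_eq_zero
      fun b _ => ?_
    linear_combination (u c * v d * w b) * hΓ.torsionFree.curvature_cyclic l c d b x

end CurvatureInCoordinates

section Contractions

variable {m n p q R : Type*} [Fintype m] [Fintype n] [CommSemiring R]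

theorem sum_sum_mul_eq_trace_transpose_mul (M X : Matrix m n R) :
    ∑ a, ∑ c, M a c * X a c = (Mᵀ * X).trace := by
  rw [← Matrix.trace_transpose, Matrix.transpose_mul, Matrix.transpose_transpose,
    Matrix.trace_mul_comm]
  exact Matrix.sum_hadamard_eq M X

theorem sum_sum_mul_mul_const (M X : Matrix m n R) (y : R) :
    ∑ a, ∑ c, M a c * (X a c * y) = (Mᵀ * X).trace * y := by
  simp only [← sum_sum_mul_eq_trace_transpose_mul, Finset.sum_mul, mul_assoc]

theorem sum_sum_mul_mul_eq_mul_transpose_mul_apply (M : Matrix m n R) (X : Matrix m p R)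
    (Y : Matrix q n R) (b : q) (d : p) :
    ∑ a, ∑ c, M a c * (X a d * Y b c) = (Y * Mᵀ * X) b d := by
  simp only [Matrix.mul_apply, Matrix.transpose_apply, Finset.sum_mul]
  exact Finset.sum_congr rfl fun a _ => Finset.sum_congr rfl fun c _ => by ring

end Contractions

section ScalarCurvature

variable {g : MatrixField}

theorem IsPseudoMetric.scalarT_eq_trace (hg : IsPseudoMetric g) (x : Fin 4 → ℝ) :
    scalarT g x = ((g x)⁻¹ * ricci (connMatrix g) x).trace := by
  simp only [scalarT, ← ricci_connMatrix_apply]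
  rw [sum_sum_mul_eq_trace_transpose_mul, hg.transpose_inv]

theorem IsPseudoMetric.contDiff_scalarT (hg : IsPseudoMetric g) : ContDiff ℝ ∞ (scalarT g) := by
  have hRic (k l : Fin 4) : ContDiff ℝ ∞ (ricciT g k l) := by
    rw [← funext (ricci_connMatrix_apply k l)]
    exact smoothEntries_ricci (smoothEntries_connMatrix hg) k l
  exact ContDiff.sum fun k _ => ContDiff.sum fun l _ =>
    (hg.smooth.inv hg.isUnit_det k l).mul (hRic k l)

end ScalarCurvature

section ParallelParacomplex

/-- A `g`-isometric paracomplex structure `j` that is parallel for `Γ`. The equality of the ranks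
of the `±1`-eigenbundles is expressed by the vanishing of the trace. -/
structure IsParallelParacomplex (Γ : Fin 4 → MatrixField) (g j : MatrixField) : Prop where
  smooth : SmoothEntries j
  mul_self : ∀ x, j x * j x = 1
  trace_eq_zero : ∀ x, (j x).trace = 0
  isometric : ∀ x, (j x)ᵀ * g x * j x = g x
  parallel : ∀ i, covEnd Γ i j = 0

/-- The bilinear form `(X, Y) ↦ g(jX, Y)`. -/
def twist (g j : MatrixField) : MatrixField :=
  fun x => (j x)ᵀ * g x

variable {Γ : Fin 4 → MatrixField} {g j : MatrixField}

namespace IsParallelParacomplex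

theorem twist_eq_mul (hj : IsParallelParacomplex Γ g j) (x : Fin 4 → ℝ) :
    twist g j x = g x * j x := by
  conv_rhs => rw [← hj.isometric x, Matrix.mul_assoc, hj.mul_self, Matrix.mul_one]
  rfl

theorem isPseudoMetric_twist (hj : IsParallelParacomplex Γ g j) (hg : IsPseudoMetric g) :
    IsPseudoMetric (twist g j) where
  smooth := hj.smooth.transpose.mul hg.smooth
  symm x := by
    rw [hj.twist_eq_mul, Matrix.transpose_mul, hg.symm, ← hj.twist_eq_mul, twist]
  isUnit_det x := by
    rw [twist, Matrix.det_mul, Matrix.det_transpose]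
    exact (Matrix.isUnit_det_of_left_inverse (hj.mul_self x)).mul (hg.isUnit_det x)

theorem isLeviCivita_twist (hj : IsParallelParacomplex Γ g j) (hg : SmoothEntries g)
    (hΓ : IsLeviCivita Γ g) : IsLeviCivita Γ (twist g j) where
  smooth := hΓ.smooth
  torsionFree := hΓ.torsionFree
  parallel i := by
    funext x
    rw [show twist g j = fun y => g y * j y from funext hj.twist_eq_mul,
      covForm_mul hg hj.smooth, hΓ.parallel, hj.parallel]
    simp

theorem connMatrix_twist (hj : IsParallelParacomplex (connMatrix g) g j)
    (hg : IsPseudoMetric g) : connMatrix (twist g j) = connMatrix g :=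
  ((hj.isLeviCivita_twist hg.smooth (isLeviCivita_connMatrix hg)).eq_connMatrix
    (hj.isPseudoMetric_twist hg)).symm

theorem inv_twist (hj : IsParallelParacomplex Γ g j) (hg : IsPseudoMetric g) (x : Fin 4 → ℝ) :
    (twist g j x)⁻¹ = j x * (g x)⁻¹ := by
  refine Matrix.inv_eq_left_inv ?_
  rw [hj.twist_eq_mul, Matrix.mul_assoc, Matrix.nonsing_inv_mul_cancel_left _ _ (hg.isUnit_det x),
    hj.mul_self]

theorem curvature_apply (hj : IsParallelParacomplex Γ g j) (hg : IsPseudoMetric g)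
    (hΓ : IsLeviCivita Γ g) (a b c d : Fin 4) (x : Fin 4 → ℝ) :
    curvature Γ c d x a b = (1 / 2) *
      ((1 : Matrix (Fin 4) (Fin 4) ℝ) a c * ricci Γ x b d
        - (1 : Matrix (Fin 4) (Fin 4) ℝ) a d * ricci Γ x b c
        + j x a c * ((j x)ᵀ * ricci Γ x) b d - j x a d * ((j x)ᵀ * ricci Γ x) b c) := by
  have hR := hΓ.isCurvatureOperator_curvatureMap hg.smooth x
  have hcomm (u v w : Fin 4 → ℝ) : curvatureMap Γ x u v (Matrix.toLin' (j x) w)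
      = Matrix.toLin' (j x) (curvatureMap Γ x u v w) := by
    rw [curvatureMap_apply, ← LinearMap.comp_apply, ← LinearMap.comp_apply, ← Matrix.toLin'_mul,
      ← Matrix.toLin'_mul, Finset.sum_mul, Finset.mul_sum]
    simp only [Finset.sum_mul, Finset.mul_sum, Matrix.smul_mul, Matrix.mul_smul,
      curvature_mul_comm_of_covEnd_eq_zero hΓ.smooth hj.smooth hj.parallel]
  have hself : (Matrix.toLinearMap₂' ℝ (g x)).IsSelfAdjoint (Matrix.toLin' (j x)) :=
    (isAdjointPair_toLinearMap₂' _ _ _ _).mpr (hj.twist_eq_mul x)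
  have hleft := hR.apply_map_left (Matrix.isSymm_toBilin'_iff_isSymm.mpr (hg.symm x))
    (LinearMap.separatingLeft_toLinearMap₂'_of_det_ne_zero' (hg.isUnit_det x).ne_zero)
    hself hcomm
  have h := curvature_eq_ricciForm_of_involution hR.swap (by simp)
    (toLin'_mul_self_eq_one (hj.mul_self x))
    (by rw [Matrix.trace_toLin'_eq, hj.trace_eq_zero]) hleft hcomm
    (Pi.single c 1) (Pi.single d 1) (Pi.single b 1)
  have := congrFun h a
  rw [curvatureMap_single, ricciForm_curvatureMap] at this
  simpa [Matrix.toLinearMap₂'_apply, Matrix.mul_apply, Pi.single_apply, Matrix.one_apply,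
    mul_comm (j x a _)] using this

theorem ricciT_twist (hj : IsParallelParacomplex (connMatrix g) g j) (hg : IsPseudoMetric g)
    (k d : Fin 4) (x : Fin 4 → ℝ) : ricciT (twist g j) k d x = ricciT g k d x := by
  rw [← ricci_connMatrix_apply, hj.connMatrix_twist hg, ricci_connMatrix_apply]

theorem riemannLow_twist (hj : IsParallelParacomplex (connMatrix g) g j) (hg : IsPseudoMetric g)
    (a b c d : Fin 4) (x : Fin 4 → ℝ) :
    riemannLow (twist g j) a b c d x = (1 / 2) *
      (twist g j x a c * ricciT g b d x - twist g j x a d * ricciT g b c x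
        + g x a c * ((j x)ᵀ * ricci (connMatrix g) x) b d
        - g x a d * ((j x)ᵀ * ricci (connMatrix g) x) b c) := by
  have hone (e : Fin 4) :
      twist g j x a e = ∑ l, twist g j x a l * (1 : Matrix (Fin 4) (Fin 4) ℝ) l e := by
    rw [← Matrix.mul_apply, Matrix.mul_one]
  have hg_eq (e : Fin 4) : g x a e = ∑ l, twist g j x a l * j x l e := by
    rw [← Matrix.mul_apply, twist, hj.isometric]
  rw [hone c, hone d, hg_eq c, hg_eq d]
  simp only [riemannLow, ← curvature_connMatrix_apply, hj.connMatrix_twist hg,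
    hj.curvature_apply hg (isLeviCivita_connMatrix hg), ricci_connMatrix_apply,
    Finset.sum_mul, ← Finset.sum_sub_distrib, ← Finset.sum_add_distrib, Finset.mul_sum]
  exact Finset.sum_congr rfl fun l _ => by ring

theorem weylT_twist (hj : IsParallelParacomplex (connMatrix g) g j) (hg : IsPseudoMetric g)
    (a b c d : Fin 4) (x : Fin 4 → ℝ) :
    weylT (twist g j) a b c d x = (1 / 2) *
      (g x a c * ((j x)ᵀ * ricci (connMatrix g) x) b d
        - g x a d * ((j x)ᵀ * ricci (connMatrix g) x) b c
        + twist g j x b c * ricci (connMatrix g) x a d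
        - twist g j x b d * ricci (connMatrix g) x a c)
      + (scalarT (twist g j) x / 6)
        * (twist g j x a c * twist g j x b d - twist g j x a d * twist g j x b c) := by
  simp only [weylT, hj.riemannLow_twist hg, hj.ricciT_twist hg, ricci_connMatrix_apply]
  ring

theorem scalarT_twist (hj : IsParallelParacomplex (connMatrix g) g j) (hg : IsPseudoMetric g)
    (x : Fin 4 → ℝ) :
    scalarT (twist g j) x = ((twist g j x)⁻¹ * ricci (connMatrix g) x).trace := by
  rw [(hj.isPseudoMetric_twist hg).scalarT_eq_trace, hj.connMatrix_twist hg]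

theorem weylT_twist_eq_zero_of_ricci_eq_smul (hj : IsParallelParacomplex (connMatrix g) g j)
    (hg : IsPseudoMetric g) {x : Fin 4 → ℝ} {lam : ℝ}
    (hRic : ricci (connMatrix g) x = lam • g x) (a b c d : Fin 4) :
    weylT (twist g j) a b c d x = 0 := by
  have hscalar : scalarT (twist g j) x = 0 := by
    rw [hj.scalarT_twist hg, hRic, hj.inv_twist hg, Matrix.mul_smul, Matrix.trace_smul,
      Matrix.nonsing_inv_mul_cancel_right _ _ (hg.isUnit_det x), hj.trace_eq_zero, smul_zero]
  have htwist : (j x)ᵀ * ricci (connMatrix g) x = lam • twist g j x := by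
    rw [hRic, Matrix.mul_smul, twist]
  rw [hj.weylT_twist hg, hscalar, htwist, hRic]
  simp only [Matrix.smul_apply, smul_eq_mul]
  ring

theorem sum_inv_mul_weylT_twist (hj : IsParallelParacomplex (connMatrix g) g j)
    (hg : IsPseudoMetric g) (b d : Fin 4) (x : Fin 4 → ℝ) :
    ∑ a, ∑ c, (g x)⁻¹ a c * weylT (twist g j) a b c d x
      = 2 * ((j x)ᵀ * ricci (connMatrix g) x) b d - scalarT g x / 2 * twist g j x b d
        - scalarT (twist g j) x / 6 * g x b d := by
  have hu := hg.isUnit_det x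
  have hexpand (a c : Fin 4) : (g x)⁻¹ a c * weylT (twist g j) a b c d x
      = (1 / 2) * ((g x)⁻¹ a c * (g x a c * ((j x)ᵀ * ricci (connMatrix g) x) b d)
        - (g x)⁻¹ a c * (g x a d * ((j x)ᵀ * ricci (connMatrix g) x) b c)
        + (g x)⁻¹ a c * (ricci (connMatrix g) x a d * twist g j x b c)
        - (g x)⁻¹ a c * (ricci (connMatrix g) x a c * twist g j x b d))
      + (scalarT (twist g j) x / 6) * ((g x)⁻¹ a c * (twist g j x a c * twist g j x b d)
        - (g x)⁻¹ a c * (twist g j x a d * twist g j x b c)) := by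
    rw [hj.weylT_twist hg]
    ring
  have htwist : twist g j x * (g x)⁻¹ = (j x)ᵀ :=
    Matrix.mul_nonsing_inv_cancel_right _ _ hu
  have htrace : ((g x)⁻¹ * twist g j x).trace = 0 := by
    rw [hj.twist_eq_mul, Matrix.nonsing_inv_mul_cancel_left _ _ hu, hj.trace_eq_zero]
  simp only [hexpand, Finset.sum_add_distrib, Finset.sum_sub_distrib, ← Finset.mul_sum,
    sum_sum_mul_mul_const, sum_sum_mul_mul_eq_mul_transpose_mul_apply, hg.transpose_inv, htwist,
    htrace]
  rw [Matrix.nonsing_inv_mul _ hu, Matrix.nonsing_inv_mul_cancel_right _ _ hu,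
    hj.twist_eq_mul, ← Matrix.mul_assoc, hj.isometric, ← hg.scalarT_eq_trace, Matrix.trace_one,
    Fintype.card_fin]
  push_cast
  ring

theorem ricci_eq_smul_of_weylT_twist_eq_zero (hj : IsParallelParacomplex (connMatrix g) g j)
    (hg : IsPseudoMetric g) {x : Fin 4 → ℝ}
    (hW : ∀ a b c d, weylT (twist g j) a b c d x = 0) :
    ricci (connMatrix g) x = (scalarT g x / 4) • g x := by
  have hcontract : (j x)ᵀ * ricci (connMatrix g) x
      = (scalarT g x / 4) • twist g j x + (scalarT (twist g j) x / 12) • g x := by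
    ext b d
    have := hj.sum_inv_mul_weylT_twist hg b d x
    simp only [hW, mul_zero, Finset.sum_const_zero] at this
    rw [Matrix.add_apply, Matrix.smul_apply, Matrix.smul_apply, smul_eq_mul, smul_eq_mul]
    linarith
  have hRic : ricci (connMatrix g) x
      = (scalarT g x / 4) • g x + (scalarT (twist g j) x / 12) • twist g j x := by
    have hjT : (j x)ᵀ * (j x)ᵀ = 1 := by
      rw [← Matrix.transpose_mul, hj.mul_self, Matrix.transpose_one]
    rw [← Matrix.one_mul (ricci _ x), ← hjT, Matrix.mul_assoc, hcontract, Matrix.mul_add,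
      Matrix.mul_smul, Matrix.mul_smul, twist, ← Matrix.mul_assoc, hjT, Matrix.one_mul]
  have hscalar : scalarT (twist g j) x = 0 := by
    have h := hj.scalarT_twist hg x
    rw [hRic, Matrix.mul_add, Matrix.mul_smul, Matrix.mul_smul,
      Matrix.nonsing_inv_mul _ ((hj.isPseudoMetric_twist hg).isUnit_det x), hj.inv_twist hg,
      Matrix.nonsing_inv_mul_cancel_right _ _ (hg.isUnit_det x), Matrix.trace_add,
      Matrix.trace_smul, Matrix.trace_smul, hj.trace_eq_zero, Matrix.trace_one,
      Fintype.card_fin] at h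
    simp only [smul_eq_mul, mul_zero, zero_add, Nat.cast_ofNat] at h
    linarith
  rw [hRic, hscalar, zero_div, zero_smul, add_zero]

end IsParallelParacomplex

end ParallelParacomplex

theorem conformally_flat_iff_einstein_general
    (g j : (Fin 4 → ℝ) → Matrix (Fin 4) (Fin 4) ℝ)
    (hgsm : ∀ k l, ContDiff ℝ (⊤ : ℕ∞) (fun x => g x k l))
    (hjsm : ∀ k l, ContDiff ℝ (⊤ : ℕ∞) (fun x => j x k l))
    (hgsymm : ∀ x, (g x)ᵀ = g x) (hgdet : ∀ x, IsUnit (g x).det)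
    (hj2 : ∀ x, j x * j x = 1)
    (hrank : ∀ x, Module.finrank ℝ
        (Module.End.eigenspace (Matrix.toLin' (j x)) 1) = 2)
    (hiso : ∀ x, (j x)ᵀ * g x * j x = g x)
    (hpar : ∀ x i k l, covDerivEnd g j i k l x = 0)
    (g' : (Fin 4 → ℝ) → Matrix (Fin 4) (Fin 4) ℝ)
    (hg' : ∀ x, g' x = (j x)ᵀ * g x) :
    (∀ x a b c d, weylT g' a b c d x = 0) ↔
      ∃ lam : ℝ, ∀ x k l, ricciT g k l x = lam * g x k l := by
  have hg : IsPseudoMetric g := ⟨hgsm, hgsymm, hgdet⟩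
  have hj : IsParallelParacomplex (connMatrix g) g j :=
    { smooth := hjsm
      mul_self := hj2
      trace_eq_zero := fun x => trace_eq_zero_of_finrank_eigenspace_toLin' (hj2 x) (by simp [hrank])
      isometric := hiso
      parallel := fun i => by
        ext x k l
        exact (covEnd_connMatrix_apply j i k l x).trans (hpar x i k l) }
  obtain rfl : g' = twist g j := funext hg'
  have heinstein (lam : ℝ) (x : Fin 4 → ℝ) : (∀ k l, ricciT g k l x = lam * g x k l) ↔
      ricci (connMatrix g) x = lam • g x := by
    simp only [← Matrix.ext_iff, ricci_connMatrix_apply, Matrix.smul_apply, smul_eq_mul]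
  simp only [heinstein]
  refine ⟨fun hW => ⟨scalarT g 0 / 4, fun x => ?_⟩, fun ⟨lam, hE⟩ x =>
    hj.weylT_twist_eq_zero_of_ricci_eq_smul hg (hE x)⟩
  have hRic (x : Fin 4 → ℝ) := hj.ricci_eq_smul_of_weylT_twist_eq_zero hg (hW x)
  rw [hRic, (isLeviCivita_connMatrix hg).eq_of_ricci_eq_smul hg
    (hg.contDiff_scalarT.div_const 4 |>.differentiable (by simp)) hRic x 0]

/-- **(Guilfoyle–Georgiou.)** Let `g` be a Riemannian metric on (a coordinate patch of) a
4-manifold endowed with a parallel isometric paracomplex structure `j`, and let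
`g'(X,Y) = g(jX,Y)` be the associated neutral metric.  Then `g'` is locally conformally
flat (vanishing Weyl tensor) if and only if `g` is Einstein. -/
theorem conformally_flat_iff_einstein
    (g j : (Fin 4 → ℝ) → Matrix (Fin 4) (Fin 4) ℝ)
    (hgsm : ∀ k l, ContDiff ℝ (⊤ : ℕ∞) (fun x => g x k l))
    (hjsm : ∀ k l, ContDiff ℝ (⊤ : ℕ∞) (fun x => j x k l))
    (hgsymm : ∀ x, (g x)ᵀ = g x) (hgpos : ∀ x, (g x).PosDef)
    (hj2 : ∀ x, j x * j x = 1)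
    (hrank : ∀ x, Module.finrank ℝ
        (Module.End.eigenspace (Matrix.toLin' (j x)) 1) = 2)
    (hiso : ∀ x, (j x)ᵀ * g x * j x = g x)
    (hpar : ∀ x i k l, covDerivEnd g j i k l x = 0)
    (g' : (Fin 4 → ℝ) → Matrix (Fin 4) (Fin 4) ℝ)
    (hg' : ∀ x, g' x = (j x)ᵀ * g x) :
    (∀ x a b c d, weylT g' a b c d x = 0) ↔
      ∃ lam : ℝ, ∀ x k l, ricciT g k l x = lam * g x k l := by
  exact conformally_flat_iff_einstein_general g j hgsm hjsm hgsymm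
    (fun x => (hgpos x).det_pos.ne'.isUnit) hj2 hrank hiso hpar g' hg'
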